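/- (Main Lemma) Let P be a complete metric space, let (A_n) be a sequence of non-empty bounded closed subsets of P that is Cauchy with respect to the Hausdorff distance, and set A = ⋂_{n=1}^∞ closure( ⋃_{i=n}^∞ A_i ). Suppose x is a point of P, ε > 0, and m is a natural number such that ρ(x, A_i) < ε for every index i > m. Then ρ(x, A) ≤ ε. -/

import Mathlib

/-!
The closed subsets of a complete space are complete for the Hausdorff distance, so the closures of
the `A i` converge to a closed set `t`. Each point of `t` is a limit of points of the `A i`, hence
`t ⊆ ⋂ n, closure (⋃ i ≥ n, A i)`; and `ρ(x, A i)` tends to `ρ(x, t)`, hence `ρ(x, t) ≤ ε`.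
-/

open Metric Set Filter

/-- The Pompeiu–Hausdorff distance between two sets:
`h(A,B) = max { sup_{x ∈ A} ρ(x,B), sup_{y ∈ B} ρ(y,A) }`. -/
noncomputable def hDist {P : Type*} [MetricSpace P] (A B : Set P) : ℝ :=
  max (⨆ x : A, infDist (x : P) B) (⨆ y : B, infDist (y : P) A)

open TopologicalSpace Topology
open scoped ENNReal

section PseudoEMetricSpace

variable {ι α : Type*} [PseudoEMetricSpace α] {s : ι → Set α} {t : Set α} {l : Filter ι}

theorem subset_closure_biUnion_of_tendsto_hausdorffEDist [l.NeBot]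
    (h : Tendsto (fun i => hausdorffEDist t (s i)) l (𝓝 0)) {I : Set ι} (hI : I ∈ l) :
    t ⊆ closure (⋃ i ∈ I, s i) := by
  intro y hy
  rw [mem_closure_iff_infEDist_zero, ← nonpos_iff_eq_zero]
  refine ge_of_tendsto h ?_
  filter_upwards [hI] with i hi
  calc infEDist y (⋃ i ∈ I, s i) ≤ infEDist y (s i) := infEDist_anti (subset_biUnion_of_mem hi)
    _ ≤ hausdorffEDist t (s i) := infEDist_le_hausdorffEDist_of_mem hy

theorem infEDist_le_of_tendsto_hausdorffEDist_of_frequently {x : α} {r : ℝ≥0∞}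
    (h : Tendsto (fun i => hausdorffEDist t (s i)) l (𝓝 0))
    (hx : ∃ᶠ i in l, infEDist x (s i) ≤ r) : infEDist x t ≤ r := by
  have hlim : Tendsto (fun i => r + hausdorffEDist t (s i)) l (𝓝 r) := by
    simpa using h.const_add r
  refine ge_of_tendsto_of_frequently hlim (hx.mono fun i hi => ?_)
  calc infEDist x t ≤ infEDist x (s i) + hausdorffEDist (s i) t :=
        infEDist_le_infEDist_add_hausdorffEDist
    _ ≤ r + hausdorffEDist t (s i) := by rw [hausdorffEDist_comm]; gcongr

end PseudoEMetricSpace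

section EMetricSpace

variable {ι α : Type*} [SemilatticeSup ι] [Nonempty ι] [EMetricSpace α] [CompleteSpace α]
  {s : ι → Set α}

theorem exists_tendsto_hausdorffEDist_of_cauchy
    (hs : ∀ ε > 0, ∃ N, ∀ m ≥ N, ∀ n ≥ N, hausdorffEDist (s m) (s n) < ε) :
    ∃ t : Set α, Tendsto (fun i => hausdorffEDist t (s i)) atTop (𝓝 0) := by
  have hcauchy : CauchySeq fun i => Closeds.closure (s i) := by
    simpa [EMetric.cauchySeq_iff, Closeds.edist_eq] using hs
  obtain ⟨t, ht⟩ := cauchySeq_tendsto_of_complete hcauchy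
  rw [tendsto_iff_edist_tendsto_0] at ht
  exact ⟨t, by simpa [Closeds.edist_eq, hausdorffEDist_comm] using ht⟩

theorem infEDist_iInter_closure_iUnion_le_of_frequently {x : α} {r : ℝ≥0∞}
    (hs : ∀ ε > 0, ∃ N, ∀ m ≥ N, ∀ n ≥ N, hausdorffEDist (s m) (s n) < ε)
    (hx : ∃ᶠ i in atTop, infEDist x (s i) ≤ r) :
    infEDist x (⋂ n, closure (⋃ i ≥ n, s i)) ≤ r := by
  obtain ⟨t, ht⟩ := exists_tendsto_hausdorffEDist_of_cauchy hs
  have hsub : t ⊆ ⋂ n, closure (⋃ i ≥ n, s i) := subset_iInter fun n =>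
    subset_closure_biUnion_of_tendsto_hausdorffEDist ht (Ici_mem_atTop n)
  exact (infEDist_anti hsub).trans (infEDist_le_of_tendsto_hausdorffEDist_of_frequently ht hx)

end EMetricSpace

theorem bddAbove_range_infDist_of_isBounded {α : Type*} [PseudoMetricSpace α] {s : Set α}
    (hs : Bornology.IsBounded s) (t : Set α) : BddAbove (range fun x : s => infDist (x : α) t) := by
  rw [← image_eq_range (infDist · t) s]
  exact ((lipschitz_infDist_pt t).isBounded_image hs).bddAbove

section MetricSpace

variable {P : Type*} [MetricSpace P] {s t : Set P}

theorem hDist_nonneg : 0 ≤ hDist s t :=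
  le_max_of_le_left (Real.iSup_nonneg fun _ => infDist_nonneg)

theorem hDist_comm : hDist s t = hDist t s :=
  max_comm _ _

theorem infDist_le_hDist_of_mem (hs : Bornology.IsBounded s) {x : P} (hx : x ∈ s) :
    infDist x t ≤ hDist s t :=
  le_max_of_le_left (le_ciSup (bddAbove_range_infDist_of_isBounded hs t) ⟨x, hx⟩)

theorem hausdorffDist_le_hDist (hs : Bornology.IsBounded s) (ht : Bornology.IsBounded t) :
    hausdorffDist s t ≤ hDist s t :=
  hausdorffDist_le_of_infDist hDist_nonneg (fun _ hx => infDist_le_hDist_of_mem hs hx)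
    fun _ hy => hDist_comm (s := s) ▸ infDist_le_hDist_of_mem ht hy

theorem hausdorffEDist_le_ofReal_hDist (hs : s.Nonempty) (ht : t.Nonempty)
    (hsb : Bornology.IsBounded s) (htb : Bornology.IsBounded t) :
    hausdorffEDist s t ≤ ENNReal.ofReal (hDist s t) :=
  (ENNReal.le_ofReal_iff_toReal_le (hausdorffEDist_ne_top_of_nonempty_of_bounded hs ht hsb htb)
    hDist_nonneg).2 (hausdorffDist_le_hDist hsb htb)

theorem main_lemma_general {ι : Type*} [SemilatticeSup ι] [Nonempty ι] [CompleteSpace P]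
    {A : ι → Set P} (hne : ∀ i, (A i).Nonempty) (hbd : ∀ i, Bornology.IsBounded (A i))
    (hCauchy : ∀ ε > (0 : ℝ), ∃ N, ∀ m ≥ N, ∀ n ≥ N, hDist (A m) (A n) < ε)
    {x : P} {ε : ℝ} (hx : ∃ᶠ i in atTop, infDist x (A i) ≤ ε) :
    infDist x (⋂ n, closure (⋃ i ≥ n, A i)) ≤ ε := by
  have hε : 0 ≤ ε := hx.exists.elim fun _ hi => infDist_nonneg.trans hi
  have hECauchy : ∀ δ > 0, ∃ N, ∀ m ≥ N, ∀ n ≥ N, hausdorffEDist (A m) (A n) < δ := by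
    intro δ hδ
    obtain ⟨r, -, hr, hrδ⟩ := ENNReal.lt_iff_exists_real_btwn.1 hδ
    obtain ⟨N, hN⟩ := hCauchy r (ENNReal.ofReal_pos.1 hr)
    refine ⟨N, fun m hm n hn => ?_⟩
    calc hausdorffEDist (A m) (A n) ≤ ENNReal.ofReal (hDist (A m) (A n)) :=
          hausdorffEDist_le_ofReal_hDist (hne m) (hne n) (hbd m) (hbd n)
      _ ≤ ENNReal.ofReal r := ENNReal.ofReal_le_ofReal (hN m hm n hn).le
      _ < δ := hrδ
  have hEx : ∃ᶠ i in atTop, infEDist x (A i) ≤ ENNReal.ofReal ε :=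
    hx.mono fun i hi => (ENNReal.le_ofReal_iff_toReal_le (infEDist_ne_top (hne i)) hε).2 hi
  exact ENNReal.toReal_le_of_le_ofReal hε
    (infEDist_iInter_closure_iUnion_le_of_frequently hECauchy hEx)

end MetricSpace

/-- Main Lemma: for a Cauchy sequence (in the Hausdorff distance) of non-empty bounded closed
sets in a complete space, with `A = ⋂_n closure (⋃_{i ≥ n} A_i)`: if `ρ(x, A_i) < ε` for every
`i > m`, then `ρ(x, A) ≤ ε`. -/
theorem main_lemma {P : Type*} [MetricSpace P] [CompleteSpace P]
    (A : ℕ → Set P)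
    (hne : ∀ n, (A n).Nonempty)
    (hbd : ∀ n, Bornology.IsBounded (A n))
    (hcl : ∀ n, IsClosed (A n))
    (hCauchy : ∀ ε > (0 : ℝ), ∃ N, ∀ m ≥ N, ∀ n ≥ N, hDist (A m) (A n) < ε)
    (x : P) (ε : ℝ) (hε : 0 < ε) (m : ℕ)
    (hx : ∀ i > m, infDist x (A i) < ε) :
    infDist x (⋂ n : ℕ, closure (⋃ i ≥ n, A i)) ≤ ε := by
  have hx' : ∀ᶠ i in atTop, infDist x (A i) ≤ ε :=
    (eventually_gt_atTop m).mono fun i hi => (hx i hi).le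
  exact main_lemma_general hne hbd hCauchy hx'.frequently
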